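/- Let θ = [0; a_1, a_2, a_3, …] be irrational with a_1 = a_2 = 1 and suppose lim_{ν→∞} Q_{ν−1}/a_{ν+1} = 0, where Q_ν are the convergent denominators. Then there exists a 1-periodic continuous function g of bounded variation with ∫_0^1 g(x)dx = 0 such that liminf_{ν→∞} ∑_{k=0}^{Q_ν − 1} g(kθ) > 0; in fact lim_{ν→∞} ∑_{k=0}^{Q_ν − 1} g(kθ) = 1/6. -/

import Mathlib

open scoped BigOperators

/-- Distance from `x` to the nearest integer. -/
noncomputable def nint (x : ℝ) : ℝ := |x - round x|

/-- Complete quotients `α_n` of `θ`: `α_0 = θ`, `α_{n+1} = 1 / {α_n}`. -/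
noncomputable def cq (θ : ℝ) : ℕ → ℝ
  | 0 => θ
  | n + 1 => 1 / Int.fract (cq θ n)

/-- Partial quotients `a_n` of the continued fraction of `θ`. -/
noncomputable def pq (θ : ℝ) (n : ℕ) : ℤ := ⌊cq θ n⌋

/-- Denominators `Q_n` of the convergents of `θ`: `Q_0 = 1`, `Q_1 = a_1`,
`Q_{n+2} = a_{n+2} Q_{n+1} + Q_n`. -/
noncomputable def qden (θ : ℝ) : ℕ → ℤ
  | 0 => 1
  | 1 => pq θ 1
  | n + 2 => pq θ (n + 2) * qden θ (n + 1) + qden θ n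

/-- Numerators `P_n` of the convergents of `θ`, for `a_0 = 0`. -/
noncomputable def pnum (θ : ℝ) : ℕ → ℤ
  | 0 => 0
  | 1 => 1
  | n + 2 => pq θ (n + 2) * pnum θ (n + 1) + pnum θ n

theorem irrational_cq {θ : ℝ} (hθ : Irrational θ) (n : ℕ) : Irrational (cq θ n) := by
  induction n with
  | zero => exact hθ
  | succ n ih =>
    have h : Irrational (Int.fract (cq θ n)) := by
      rw [Int.fract]
      exact ih.sub_intCast _
    simpa [cq] using h.inv

theorem fract_cq_pos {θ : ℝ} (hθ : Irrational θ) (n : ℕ) : 0 < Int.fract (cq θ n) :=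
  Int.fract_pos.2 ((irrational_cq hθ n).ne_int _)

theorem one_le_pq_succ {θ : ℝ} (hθ : Irrational θ) (n : ℕ) : 1 ≤ pq θ (n + 1) := by
  rw [pq, Int.le_floor, cq, Int.cast_one]
  exact (one_le_div (fract_cq_pos hθ n)).2 (Int.fract_lt_one _).le

theorem qden_pos {θ : ℝ} (hθ : Irrational θ) : ∀ n, 0 < qden θ n
  | 0 => by simp [qden]
  | 1 => one_le_pq_succ hθ 0
  | n + 2 => by
    have h1 := qden_pos hθ n
    have h2 := qden_pos hθ (n + 1)
    have h3 := one_le_pq_succ hθ (n + 1)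
    rw [qden]
    positivity

theorem qden_mul_pnum_sub (θ : ℝ) (n : ℕ) :
    qden θ (n + 1) * pnum θ n - qden θ n * pnum θ (n + 1) = -(-1) ^ n := by
  induction n with
  | zero => simp [qden, pnum]
  | succ n ih =>
    rw [qden, pnum, pow_succ]
    linear_combination -ih

theorem isCoprime_pnum_qden (θ : ℝ) (n : ℕ) : IsCoprime (pnum θ n) (qden θ n) := by
  have h := qden_mul_pnum_sub θ n
  have h2 : ((-1 : ℤ) ^ n) * (-1) ^ n = 1 := by rw [← mul_pow]; simp
  exact ⟨-(-1) ^ n * qden θ (n + 1), (-1) ^ n * pnum θ (n + 1), by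
    linear_combination -(-1) ^ n * h + h2⟩

theorem qden_mul_sub_pnum_succ {θ : ℝ} (hθ : Irrational θ) (h0 : pq θ 0 = 0) (n : ℕ) :
    (qden θ (n + 1) * θ - pnum θ (n + 1)) * cq θ (n + 2) = -(qden θ n * θ - pnum θ n) := by
  have key (n : ℕ) : cq θ (n + 1) * (cq θ n - pq θ n) = 1 := by
    rw [cq, pq]
    exact one_div_mul_cancel (fract_cq_pos hθ n).ne'
  induction n with
  | zero =>
    have h1 := key 0
    have h2 := key 1
    rw [h0, cq] at h1
    simp only [qden, pnum]
    push_cast at *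
    linear_combination (-θ) * h2 + cq θ 2 * h1
  | succ n ih =>
    have h := key (n + 2)
    rw [qden, pnum]
    push_cast
    linear_combination cq θ (n + 3) * ih - (qden θ (n + 1) * θ - pnum θ (n + 1)) * h

theorem qden_mul_abs_le_one {θ : ℝ} (hθ : Irrational θ) (h0 : pq θ 0 = 0) (n : ℕ) :
    qden θ (n + 1) * |qden θ n * θ - pnum θ n| ≤ 1 := by
  have hdet : (qden θ (n + 1) * pnum θ n - qden θ n * pnum θ (n + 1) : ℝ) = -(-1) ^ n := by
    exact_mod_cast qden_mul_pnum_sub θ n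
  have hrec := qden_mul_sub_pnum_succ hθ h0 n
  have hq1 : (0 : ℝ) < qden θ (n + 1) := by exact_mod_cast qden_pos hθ (n + 1)
  have hq0 : (0 : ℝ) < qden θ n := by exact_mod_cast qden_pos hθ n
  have hα : 0 < cq θ (n + 2) := by
    rw [cq]
    exact one_div_pos.2 (fract_cq_pos hθ (n + 1))
  set x := (qden θ n * θ - pnum θ n : ℝ)
  set y := (qden θ (n + 1) * θ - pnum θ (n + 1) : ℝ)
  have hW : qden θ (n + 1) * x - qden θ n * y = (-1) ^ n := by
    simp only [x, y]
    linear_combination -hdet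
  have hW' : (qden θ (n + 1) * cq θ (n + 2) + qden θ n) * |x| = cq θ (n + 2) := by
    have : (qden θ (n + 1) * cq θ (n + 2) + qden θ n) * x = (-1) ^ n * cq θ (n + 2) := by
      linear_combination cq θ (n + 2) * hW + qden θ n * hrec
    have h := congrArg abs this
    rwa [abs_mul, abs_mul, abs_pow, abs_neg, abs_one, one_pow, one_mul, abs_of_pos hα,
      abs_of_pos (by positivity)] at h
  have h1 : qden θ (n + 1) * |x| * cq θ (n + 2) ≤ 1 * cq θ (n + 2) := by
    nlinarith [abs_nonneg x, mul_nonneg hq0.le (abs_nonneg x)]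
  exact le_of_mul_le_mul_right h1 hα

theorem sum_range_emod {M : Type*} [AddCommMonoid M] {Q : ℕ} (hQ : 0 < Q) {P : ℤ}
    (hc : IsCoprime P (Q : ℤ)) (h : ℤ → M) :
    ∑ k ∈ Finset.range Q, h ((k * P) % Q) = ∑ j ∈ Finset.range Q, h j := by
  have hQ' : (Q : ℤ) ≠ 0 := by positivity
  have hnn (k : ℕ) : 0 ≤ ((k : ℤ) * P) % Q := Int.emod_nonneg _ hQ'
  have hlt (k : ℕ) : ((k : ℤ) * P) % Q < Q := Int.emod_lt_of_pos _ (by positivity)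
  have hmaps : Set.MapsTo (fun k : ℕ => (((k : ℤ) * P) % Q).toNat)
      (Finset.range Q) (Finset.range Q) := by
    intro k _
    have := hnn k
    have := hlt k
    simp only [Finset.coe_range, Set.mem_Iio]
    omega
  have hinj : Set.InjOn (fun k : ℕ => (((k : ℤ) * P) % Q).toNat) (Finset.range Q) := by
    intro k hk l hl hkl
    simp only [Finset.coe_range, Set.mem_Iio] at hk hl
    have h1 : ((k : ℤ) * P) % Q = ((l : ℤ) * P) % Q := by
      have := hnn k
      have := hnn l
      simp only at hkl
      omega
    have h2 : (Q : ℤ) ∣ (k - l) * P := by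
      rw [sub_mul]
      exact Int.dvd_of_emod_eq_zero (Int.emod_eq_emod_iff_emod_sub_eq_zero.1 h1)
    have h3 : (Q : ℤ) ∣ k - l := hc.symm.dvd_of_dvd_mul_right h2
    have := Int.eq_zero_of_abs_lt_dvd h3 (by rw [abs_lt]; omega)
    omega
  refine Finset.sum_nbij _ hmaps hinj
    (Finset.surjOn_of_injOn_of_card_le _ hmaps hinj le_rfl) fun k _ => ?_
  rw [Int.toNat_of_nonneg (hnn k)]

theorem abs_sum_range_kernel_sub_le {Q : ℕ} (hQ : 0 < Q) {P : ℤ} (hc : IsCoprime P (Q : ℤ))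
    {θ t : ℝ} (hD : Q * |Q * θ - P| ≤ 1 / 8) (ht : t ∈ Set.Ico (0 : ℝ) 1)
    (hf : |Int.fract (Q * t) - 3 / 4| ≤ 1 / 8) :
    |∑ k ∈ Finset.range Q, ((Set.Iic (Int.fract (k * θ))).indicator 1 t
        - Int.fract (k * θ) + (t - 1 / 2)) - (Int.fract (Q * t) - 1 / 2)|
      ≤ Q * |Q * θ - P| := by
  set D := Q * θ - P with hDdef
  have hQ0 : (0 : ℝ) < Q := by exact_mod_cast hQ
  have hQ' : (Q : ℤ) ≠ 0 := by positivity
  obtain ⟨f, hfl⟩ : ∃ f : ℕ, ⌊Q * t⌋ = f :=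
    ⟨_, (Int.toNat_of_nonneg (Int.floor_nonneg.2 (mul_nonneg hQ0.le ht.1))).symm⟩
  have hfr : Int.fract (Q * t) = Q * t - f := by rw [Int.fract, hfl, Int.cast_natCast]
  rw [hfr] at hf ⊢
  rw [abs_le] at hf
  have hfQ : f < Q := by
    have : (f : ℝ) < Q := by nlinarith [ht.2]
    exact_mod_cast this
  let ψ : ℤ → ℝ := fun j => (if (f : ℤ) < j then 1 else 0) - j / Q + (t - 1 / 2)
  have hψ : ∑ j ∈ Finset.range Q, ψ j = Q * t - f - 1 / 2 := by
    have hcard : ∑ j ∈ Finset.range Q, (if (f : ℤ) < (j : ℕ) then (1 : ℝ) else 0)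
        = Q - 1 - f := by
      have : (Finset.range Q).filter (fun j : ℕ => (f : ℤ) < j) = Finset.Ico (f + 1) Q := by
        ext j
        simp
        omega
      rw [Finset.sum_boole, this, Nat.card_Ico, Nat.cast_sub hfQ]
      push_cast
      ring
    have hid : ∑ j ∈ Finset.range Q, (j : ℝ) = Q * (Q - 1) / 2 := by
      have := Finset.sum_range_id_mul_two Q
      have h := congrArg (Nat.cast : ℕ → ℝ) this
      push_cast [Nat.cast_sub hQ] at h
      linarith
    simp only [ψ, Int.cast_natCast, Finset.sum_add_distrib, Finset.sum_sub_distrib, hcard,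
      ← Finset.sum_div, hid, Finset.sum_const, Finset.card_range, nsmul_eq_mul]
    field_simp
    ring
  have hterm : ∀ k ∈ Finset.range Q, (Set.Iic (Int.fract (k * θ))).indicator 1 t
      - Int.fract (k * θ) + (t - 1 / 2) = ψ ((k * P) % Q) - k * D / Q := by
    intro k hk
    rw [Finset.mem_range] at hk
    have hkQ : (k : ℝ) < Q := by exact_mod_cast hk
    set j := ((k : ℤ) * P) % Q with hj
    have hj0 : 0 ≤ j := Int.emod_nonneg _ hQ'
    have hjQ : j + 1 ≤ Q := Int.emod_lt_of_pos _ (by positivity)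
    have hjQ' : (j : ℝ) + 1 ≤ Q := by exact_mod_cast hjQ
    have hkD : |k * D| ≤ 1 / 8 := by
      rw [abs_mul, Nat.abs_cast]
      exact (mul_le_mul_of_nonneg_right hkQ.le (abs_nonneg _)).trans hD
    rw [abs_le] at hkD
    have hnn : 0 ≤ j + k * D := by
      rcases Nat.eq_zero_or_pos k with rfl | hk0
      · simp [hj]
      · have : 1 ≤ j := by
          rcases hj0.lt_or_eq with h | h
          · exact h
          · have h2 : (Q : ℤ) ∣ k := hc.symm.dvd_of_dvd_mul_right (Int.dvd_of_emod_eq_zero h.symm)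
            have := Nat.le_of_dvd hk0 (Int.natCast_dvd_natCast.1 h2)
            omega
        have : (1 : ℝ) ≤ j := by exact_mod_cast this
        linarith
    have hfract : Int.fract (k * θ) = (j + k * D) / Q := by
      rw [Int.fract_eq_iff]
      refine ⟨by positivity, (div_lt_one hQ0).2 (by linarith), (k * P) / Q, ?_⟩
      have h := Int.emod_add_mul_ediv ((k : ℤ) * P) Q
      rw [← hj] at h
      have h' : (j : ℝ) + Q * ((k * P / Q : ℤ) : ℝ) = k * P := by exact_mod_cast h
      field_simp
      rw [hDdef]
      linear_combination -h'
    have hiff : t ≤ (j + k * D) / Q ↔ (f : ℤ) < j := by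
      rw [le_div_iff₀ hQ0]
      constructor
      · intro h
        by_contra! hle
        have : (j : ℝ) ≤ f := by exact_mod_cast hle
        linarith
      · intro h
        have : (f : ℝ) + 1 ≤ j := by exact_mod_cast h
        linarith
    simp only [hfract, Set.indicator_apply, Set.mem_Iic, hiff, ψ, Pi.one_apply]
    ring
  rw [Finset.sum_congr rfl hterm, Finset.sum_sub_distrib, sum_range_emod hQ hc, hψ,
    sub_sub_cancel_left, abs_neg]
  refine (Finset.abs_sum_le_sum_abs _ _).trans ?_
  refine (Finset.sum_le_card_nsmul _ _ |D| fun k hk => ?_).trans_eq (by simp)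
  rw [Finset.mem_range] at hk
  have hkQ : (k : ℝ) ≤ Q := by exact_mod_cast hk.le
  rw [abs_div, abs_mul, Nat.abs_cast, Nat.abs_cast, div_le_iff₀ hQ0, mul_comm]
  exact mul_le_mul_of_nonneg_left hkQ (abs_nonneg _)

theorem exists_lacunary_mul_near_int {q c : ℕ → ℝ} (hq : ∀ n, 0 < q n)
    (hq2 : ∀ n, 2 * q n ≤ q (n + 1)) (hc : ∀ n, c n ∈ Set.Icc (0 : ℝ) 1) :
    ∃ T : ℝ, ∀ n, ∃ m : ℤ, 0 ≤ q n * T - c n - m ∧ q n * T - c n - m ≤ 4 * (q n / q (n + 1)) := by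
  let t : ℕ → ℝ := fun n =>
    Nat.rec (c 0 / q 0) (fun n x => (⌈q (n + 1) * x⌉ + c (n + 1)) / q (n + 1)) n
  have ht (n : ℕ) : t (n + 1) = (⌈q (n + 1) * t n⌉ + c (n + 1)) / q (n + 1) := rfl
  have hmono : Monotone t := monotone_nat_of_le_succ fun n => by
    rw [ht, le_div_iff₀ (hq _)]
    linarith [Int.le_ceil (q (n + 1) * t n), (hc (n + 1)).1]
  have hstep (n : ℕ) : t (n + 1) ≤ t n + 2 / q (n + 1) := by
    rw [ht, div_le_iff₀ (hq _), add_mul, div_mul_cancel₀ _ (hq _).ne']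
    linarith [Int.ceil_lt_add_one (q (n + 1) * t n), (hc (n + 1)).2]
  have hanti : Antitone fun n => t n + 4 / q (n + 1) := antitone_nat_of_succ_le fun n => by
    have h : 4 / q (n + 2) ≤ 2 / q (n + 1) := by
      rw [div_le_div_iff₀ (hq _) (hq _)]
      linarith [hq2 (n + 1)]
    have h2 : 4 / q (n + 1) = 2 / q (n + 1) + 2 / q (n + 1) := by ring
    linarith [hstep n]
  have hT := hmono.ciSup_mem_iInter_Icc_of_antitone hanti fun n => by
    have := div_pos four_pos (hq (n + 1))
    linarith
  refine ⟨⨆ n, t n, fun n => ?_⟩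
  have hTn := Set.mem_iInter.1 hT n
  obtain ⟨m, hm⟩ : ∃ m : ℤ, q n * t n - c n = m := by
    cases n with
    | zero => exact ⟨0, by simp [t, mul_div_cancel₀ _ (hq 0).ne']⟩
    | succ n => exact ⟨⌈q (n + 1) * t n⌉, by rw [ht, mul_div_cancel₀ _ (hq _).ne']; ring⟩
  refine ⟨m, ?_, ?_⟩
  · rw [← hm]
    linarith [mul_le_mul_of_nonneg_left hTn.1 (hq n).le]
  · rw [← hm]
    have h := mul_le_mul_of_nonneg_left hTn.2 (hq n).le
    have h2 : q n * (t n + 4 / q (n + 1)) = q n * t n + 4 * (q n / q (n + 1)) := by ring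
    linarith

/-- The points of `[0, 1)` whose multiples by `q n` are close to `3 / 4` modulo one. -/
def nearThreeQuarters (q : ℕ → ℤ) : Set ℝ :=
  {t | t ∈ Set.Ico (0 : ℝ) 1 ∧
    ∀ n, |Int.fract (q n * t) - 3 / 4| ≤ 14 * ((q n : ℝ) / q (n + 1))}

theorem measurableSet_nearThreeQuarters (q : ℕ → ℤ) : MeasurableSet (nearThreeQuarters q) := by
  have h : nearThreeQuarters q = Set.Ico 0 1 ∩ ⋂ n, {t : ℝ |
      |Int.fract (q n * t) - 3 / 4| ≤ 14 * ((q n : ℝ) / q (n + 1))} := by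
    ext
    simp [nearThreeQuarters]
  rw [h]
  refine measurableSet_Ico.inter <| MeasurableSet.iInter fun n =>
    measurableSet_le ?_ measurable_const
  have : Measurable fun t : ℝ => Int.fract (q n * t) :=
    measurable_fract.comp (measurable_const_mul _)
  exact (this.sub_const _).abs

theorem not_countable_nearThreeQuarters {q : ℕ → ℤ} (hq : ∀ n, 0 < q n)
    (hq' : ∀ n, 1000 * q n ≤ q (n + 1)) : ¬ (nearThreeQuarters q).Countable := by
  rw [Set.countable_iff_exists_subset_range]
  rintro ⟨x, hx⟩
  have hq0 (n : ℕ) : (0 : ℝ) < q n := by exact_mod_cast hq n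
  have hq1 (n : ℕ) : (1000 : ℝ) * q n ≤ q (n + 1) := by exact_mod_cast hq' n
  have hr0 (n : ℕ) : (0 : ℝ) < q n / q (n + 1) := div_pos (hq0 _) (hq0 _)
  have hr1 (n : ℕ) : (q n : ℝ) / q (n + 1) ≤ 1 / 1000 := by
    rw [div_le_div_iff₀ (hq0 _) (by norm_num)]
    linarith [hq1 n]
  let c : ℕ → ℝ := fun n => if Int.fract (q n * x n) < 3 / 4 + 7 * ((q n : ℝ) / q (n + 1))
    then 3 / 4 + 10 * ((q n : ℝ) / q (n + 1)) else 3 / 4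
  have hc (n : ℕ) : 3 / 4 ≤ c n ∧ c n ≤ 3 / 4 + 10 * ((q n : ℝ) / q (n + 1)) := by
    have := hr0 n
    simp only [c]
    split_ifs <;> constructor <;> linarith
  obtain ⟨T, hT⟩ := exists_lacunary_mul_near_int (q := fun n => (q n : ℝ)) (c := c) hq0
    (fun n => by linarith [hq1 n, hq0 n])
    (fun n => ⟨by linarith [(hc n).1], by linarith [(hc n).2, hr1 n]⟩)
  have hfract (n : ℕ) : c n ≤ Int.fract (q n * Int.fract T) ∧
      Int.fract (q n * Int.fract T) ≤ c n + 4 * ((q n : ℝ) / q (n + 1)) := by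
    obtain ⟨m, h1, h2⟩ := hT n
    have h : Int.fract (q n * Int.fract T) = q n * T - m := by
      rw [Int.fract_eq_iff]
      refine ⟨by linarith [(hc n).1], by linarith [(hc n).2, hr1 n], m - q n * ⌊T⌋, ?_⟩
      rw [Int.fract]
      push_cast
      ring
    rw [h]
    constructor <;> linarith
  have hmem : Int.fract T ∈ nearThreeQuarters q := by
    refine ⟨⟨Int.fract_nonneg _, Int.fract_lt_one _⟩, fun n => ?_⟩
    rw [abs_le]
    constructor <;> linarith [(hfract n).1, (hfract n).2, (hc n).1, (hc n).2, hr0 n]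
  obtain ⟨n, hn⟩ := hx hmem
  have h := hfract n
  rw [← hn] at h
  have := hr0 n
  simp only [c] at h
  split_ifs at h with hlt
  · linarith [h.1]
  · linarith [h.2]

open MeasureTheory in
theorem exists_isProbabilityMeasure_nullSingletonClass {C : Set ℝ} (hC : MeasurableSet C)
    (hC' : ¬ C.Countable) :
    ∃ μ : Measure ℝ, IsProbabilityMeasure μ ∧ NullSingletonClass μ ∧ ∀ᵐ t ∂μ, t ∈ C := by
  have := hC.standardBorel
  let e : unitInterval ≃ᵐ C := PolishSpace.measurableEquivOfNotCountable
    (Cardinal.Real.Icc_countable_iff.not.2 (by norm_num)) hC'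
  have hm : Measurable fun u => (e u : ℝ) := measurable_subtype_coe.comp e.measurable
  refine ⟨volume.map fun u => (e u : ℝ), Measure.isProbabilityMeasure_map hm.aemeasurable,
    ⟨fun x => ?_⟩, ?_⟩
  · rw [Measure.map_apply hm (measurableSet_singleton x)]
    exact (Set.subsingleton_singleton.preimage
      (Subtype.val_injective.comp e.injective)).measure_zero _
  · refine (ae_map_iff hm.aemeasurable hC).2 ?_
    exact .of_forall fun u => (e u).2

theorem BoundedVariationOn.of_edist_le {α E F : Type*} [LinearOrder α] [PseudoEMetricSpace E]
    [PseudoEMetricSpace F] {f : α → E} {g : α → F} {s : Set α} (hg : BoundedVariationOn g s)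
    (h : ∀ x ∈ s, ∀ y ∈ s, edist (f x) (f y) ≤ edist (g x) (g y)) : BoundedVariationOn f s :=
  ne_top_of_le_ne_top hg <| iSup_mono fun p =>
    Finset.sum_le_sum fun _ _ => h _ (p.2.2.2 _) _ (p.2.2.2 _)

section CenteredCDF

open MeasureTheory

/-- The one-periodic function `F(x) - x` on `[0, 1)`, `F` the distribution function of `μ`, minus
its mean. -/
noncomputable def centeredCDF (μ : Measure ℝ) (y : ℝ) : ℝ :=
  μ.real (Set.Iic (Int.fract y)) - Int.fract y + (∫ t, t ∂μ - 1 / 2)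

variable {μ : Measure ℝ}

theorem centeredCDF_add_one (y : ℝ) : centeredCDF μ (y + 1) = centeredCDF μ y := by
  rw [centeredCDF, Int.fract_add_one, centeredCDF]

theorem measureReal_Iic_zero [NullSingletonClass μ] (hμ : ∀ᵐ t ∂μ, t ∈ Set.Ico (0 : ℝ) 1) :
    μ.real (Set.Iic 0) = 0 := by
  have h : μ (Set.Iio 0) = 0 := by
    rw [← compl_compl (Set.Iio (0 : ℝ)), ← mem_ae_iff]
    filter_upwards [hμ] with t ht
    simpa using ht.1
  rw [measureReal_def, ← measure_congr Iio_ae_eq_Iic, h, ENNReal.toReal_zero]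

variable [IsProbabilityMeasure μ]

theorem measureReal_Iic_one (hμ : ∀ᵐ t ∂μ, t ∈ Set.Ico (0 : ℝ) 1) :
    μ.real (Set.Iic 1) = 1 := by
  have h : ∀ᵐ t ∂μ, t ∈ Set.Iic (1 : ℝ) := hμ.mono fun t ht => ht.2.le
  rw [measureReal_def, (prob_compl_eq_zero_iff measurableSet_Iic).1 h, ENNReal.toReal_one]

theorem monotone_measureReal_Iic : Monotone fun x => μ.real (Set.Iic x) :=
  fun _ _ h => measureReal_mono (Set.Iic_subset_Iic.2 h)

theorem continuous_measureReal_Iic [NullSingletonClass μ] :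
    Continuous fun x => μ.real (Set.Iic x) := by
  have h (y : ℝ) : μ.real (Set.Iic y) = ∫ t, (Set.Iic y).indicator 1 t ∂μ :=
    (integral_indicator_one measurableSet_Iic).symm
  simp only [h]
  refine continuous_iff_continuousAt.2 fun y => continuousAt_of_dominated (bound := fun _ => 1)
    (.of_forall fun x => (measurable_one.indicator measurableSet_Iic).aestronglyMeasurable)
    (.of_forall fun x => .of_forall fun t => ?_) (integrable_const _) ?_
  · exact (norm_indicator_le_norm_self _ _).trans (by simp)
  · filter_upwards [compl_mem_ae_iff.2 (measure_singleton y)] with t ht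
    rcases lt_or_gt_of_ne (show t ≠ y from ht) with hlt | hlt
    · refine (continuousAt_const (y := (1 : ℝ))).congr ?_
      filter_upwards [lt_mem_nhds hlt] with x hx
      simp [hx.le]
    · refine (continuousAt_const (y := (0 : ℝ))).congr ?_
      filter_upwards [gt_mem_nhds hlt] with x hx
      simp [hx]

theorem centeredCDF_eqOn [NullSingletonClass μ] (hμ : ∀ᵐ t ∂μ, t ∈ Set.Ico (0 : ℝ) 1) :
    Set.EqOn (centeredCDF μ)
      (fun y => μ.real (Set.Iic y) - y + (∫ t, t ∂μ - 1 / 2)) (Set.Icc 0 1) := by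
  intro y hy
  rcases hy.2.lt_or_eq with h | rfl
  · simp only [centeredCDF, Int.fract_eq_self.2 ⟨hy.1, h⟩]
  · simp [centeredCDF, measureReal_Iic_zero hμ, measureReal_Iic_one hμ]

theorem continuous_centeredCDF [NullSingletonClass μ] (hμ : ∀ᵐ t ∂μ, t ∈ Set.Ico (0 : ℝ) 1) :
    Continuous (centeredCDF μ) :=
  ContinuousOn.comp_fract'' (f := fun y => μ.real (Set.Iic y) - y + (∫ t, t ∂μ - 1 / 2))
    ((continuous_measureReal_Iic.sub continuous_id).add continuous_const).continuousOn
    (by simp [measureReal_Iic_zero hμ, measureReal_Iic_one hμ])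

theorem boundedVariationOn_centeredCDF [NullSingletonClass μ]
    (hμ : ∀ᵐ t ∂μ, t ∈ Set.Ico (0 : ℝ) 1) :
    BoundedVariationOn (centeredCDF μ) (Set.Icc 0 1) := by
  have hG : Monotone fun x => μ.real (Set.Iic x) + x := monotone_measureReal_Iic.add monotone_id
  have hGv : BoundedVariationOn (fun x => μ.real (Set.Iic x) + x) (Set.Icc 0 1) := by
    have := (hG.monotoneOn (Set.Icc 0 1)).locallyBoundedVariationOn 0 1 (by simp) (by simp)
    rwa [Set.inter_self] at this
  refine hGv.of_edist_le fun x hx y hy => ?_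
  rw [edist_dist, edist_dist]
  refine ENNReal.ofReal_le_ofReal ?_
  rw [centeredCDF_eqOn hμ hx, centeredCDF_eqOn hμ hy, Real.dist_eq, Real.dist_eq]
  rcases le_total x y with h | h
  · have := monotone_measureReal_Iic (μ := μ) h
    simp only at this
    rw [abs_le, abs_of_nonpos (by linarith)]
    constructor <;> linarith
  · have := monotone_measureReal_Iic (μ := μ) h
    simp only at this
    rw [abs_le, abs_of_nonneg (by linarith)]
    constructor <;> linarith

theorem integrable_id_of_ae_mem_Ico (hμ : ∀ᵐ t ∂μ, t ∈ Set.Ico (0 : ℝ) 1) :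
    Integrable (fun t => t) μ :=
  Integrable.of_bound measurable_id.aestronglyMeasurable 1 <| hμ.mono fun t ht => by
    rw [Real.norm_eq_abs, abs_of_nonneg ht.1]
    exact ht.2.le

theorem setIntegral_measureReal_Iic (hμ : ∀ᵐ t ∂μ, t ∈ Set.Ico (0 : ℝ) 1) :
    ∫ y in Set.Ico (0 : ℝ) 1, μ.real (Set.Iic y) = 1 - ∫ t, t ∂μ := by
  have hS : MeasurableSet {p : ℝ × ℝ | p.2 ≤ p.1} := measurableSet_le measurable_snd measurable_fst
  have hswap := integral_integral_swap (μ := volume.restrict (Set.Ico (0 : ℝ) 1)) (ν := μ)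
    (f := fun y t => {p : ℝ × ℝ | p.2 ≤ p.1}.indicator (fun _ => (1 : ℝ)) (y, t))
    ((integrable_const (1 : ℝ)).indicator hS)
  have hleft (y : ℝ) :
      ∫ t, {p : ℝ × ℝ | p.2 ≤ p.1}.indicator (fun _ => (1 : ℝ)) (y, t) ∂μ = μ.real (Set.Iic y) :=
    integral_indicator_one measurableSet_Iic
  have hright : ∀ᵐ t ∂μ, ∫ y in Set.Ico (0 : ℝ) 1,
      {p : ℝ × ℝ | p.2 ≤ p.1}.indicator (fun _ => (1 : ℝ)) (y, t) = 1 - t := by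
    filter_upwards [hμ] with t ht
    refine (integral_indicator_one (s := Set.Ici t) measurableSet_Ici).trans ?_
    rw [measureReal_restrict_apply measurableSet_Ici, Set.inter_comm, Set.Ico_inter_Ici,
      max_eq_right ht.1, Real.volume_real_Ico_of_le ht.2.le]
  simp only [hleft] at hswap
  rw [hswap, integral_congr_ae hright,
    integral_sub (integrable_const _) (integrable_id_of_ae_mem_Ico hμ)]
  simp

theorem integral_centeredCDF [NullSingletonClass μ] (hμ : ∀ᵐ t ∂μ, t ∈ Set.Ico (0 : ℝ) 1) :
    ∫ y in (0 : ℝ)..1, centeredCDF μ y = 0 := by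
  have hF : IntervalIntegrable (fun y => μ.real (Set.Iic y)) volume 0 1 :=
    continuous_measureReal_Iic.intervalIntegrable _ _
  have hI : ∫ y in (0 : ℝ)..1, μ.real (Set.Iic y) = 1 - ∫ t, t ∂μ := by
    rw [intervalIntegral.integral_of_le zero_le_one, integral_Ioc_eq_integral_Ioo,
      ← integral_Ico_eq_integral_Ioo, setIntegral_measureReal_Iic hμ]
  rw [intervalIntegral.integral_congr
      (by rw [Set.uIcc_of_le zero_le_one]; exact centeredCDF_eqOn hμ),
    intervalIntegral.integral_add (hF.sub intervalIntegral.intervalIntegrable_id)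
      intervalIntegrable_const,
    intervalIntegral.integral_sub hF intervalIntegral.intervalIntegrable_id, hI]
  simp
  ring

theorem abs_sum_centeredCDF_sub_le (hμ : ∀ᵐ t ∂μ, t ∈ Set.Ico (0 : ℝ) 1) {θ ε c : ℝ} {Q : ℕ}
    (h : ∀ᵐ t ∂μ, |∑ k ∈ Finset.range Q, ((Set.Iic (Int.fract (k * θ))).indicator 1 t
        - Int.fract (k * θ) + (t - 1 / 2)) - c| ≤ ε) :
    |∑ k ∈ Finset.range Q, centeredCDF μ (k * θ) - c| ≤ ε := by
  have hid := integrable_id_of_ae_mem_Ico hμ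
  have hind (y : ℝ) : Integrable (fun t => (Set.Iic (Int.fract y)).indicator (1 : ℝ → ℝ) t) μ :=
    (integrable_const (1 : ℝ)).indicator measurableSet_Iic
  have hint (y : ℝ) : Integrable (fun t => (Set.Iic (Int.fract y)).indicator (1 : ℝ → ℝ) t
      - Int.fract y + (t - 1 / 2)) μ :=
    ((hind y).sub (integrable_const _)).add (hid.sub (integrable_const _))
  have hval (y : ℝ) : ∫ t, ((Set.Iic (Int.fract y)).indicator (1 : ℝ → ℝ) t
      - Int.fract y + (t - 1 / 2)) ∂μ = centeredCDF μ y := by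
    rw [integral_add (f := fun t => (Set.Iic (Int.fract y)).indicator (1 : ℝ → ℝ) t - Int.fract y)
        (g := fun t => t - 1 / 2) ((hind y).sub (integrable_const _))
        (hid.sub (integrable_const _)),
      integral_sub (hind y) (integrable_const _), integral_sub hid (integrable_const _),
      integral_indicator_one measurableSet_Iic, centeredCDF]
    simp
  have hsum : ∫ t, (∑ k ∈ Finset.range Q, ((Set.Iic (Int.fract (k * θ))).indicator 1 t
      - Int.fract (k * θ) + (t - 1 / 2)) - c) ∂μ
      = ∑ k ∈ Finset.range Q, centeredCDF μ (k * θ) - c := by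
    rw [integral_sub (integrable_finsetSum _ fun k _ => hint _) (integrable_const _),
      integral_finsetSum _ fun k _ => hint _]
    simp only [hval, integral_const, probReal_univ, one_smul]
  rw [← hsum, ← Real.norm_eq_abs]
  refine (norm_integral_le_of_norm_le_const (C := ε) ?_).trans (by simp)
  simpa only [Real.norm_eq_abs] using h

end CenteredCDF

theorem tendsto_qden_div_succ {θ : ℝ} (hθ : Irrational θ)
    (hfast : Filter.Tendsto (fun ν : ℕ => (qden θ ν : ℝ) / (pq θ (ν + 2) : ℝ))
      Filter.atTop (nhds 0)) :
    Filter.Tendsto (fun ν : ℕ => (qden θ ν : ℝ) / (qden θ (ν + 1) : ℝ))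
      Filter.atTop (nhds 0) := by
  rw [← Filter.tendsto_add_atTop_iff_nat 1]
  have hq (n : ℕ) : (1 : ℝ) ≤ qden θ n := by exact_mod_cast qden_pos hθ n
  have hp (n : ℕ) : (1 : ℝ) ≤ pq θ (n + 1) := by exact_mod_cast one_le_pq_succ hθ n
  refine squeeze_zero (fun n => div_nonneg (by linarith [hq (n + 1)]) (by linarith [hq (n + 2)]))
    (fun n => ?_) hfast
  have h0 := hq n
  have h1 := hq (n + 1)
  have h2 := hp (n + 1)
  rw [show qden θ (n + 1 + 1) = pq θ (n + 2) * qden θ (n + 1) + qden θ n from rfl,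
    div_le_div_iff₀ (by push_cast; positivity) (by positivity)]
  push_cast
  have : (qden θ (n + 1) : ℝ) * pq θ (n + 2) ≤ qden θ n * (qden θ (n + 1) * pq θ (n + 2)) :=
    le_mul_of_one_le_left (by positivity) h0
  nlinarith [mul_self_nonneg (qden θ n : ℝ)]

open Filter in
/-- Theorem 2: if `θ = [0;1,1,a_3,…]` and `Q_{ν−1}/a_{ν+1} → 0`, there
is a continuous 1-periodic function of bounded variation with zero mean whose sums at the
convergent denominators tend to `1/6` (so the liminf is positive). -/
theorem stmt11 (θ : ℝ) (hθ : Irrational θ)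
    (h0 : pq θ 0 = 0) (ha1 : pq θ 1 = 1) (ha2 : pq θ 2 = 1)
    (hfast : Filter.Tendsto (fun ν : ℕ => (qden θ ν : ℝ) / (pq θ (ν + 2) : ℝ))
      atTop (nhds 0)) :
    ∃ g : ℝ → ℝ, Continuous g ∧ (∀ x : ℝ, g (x + 1) = g x) ∧
      BoundedVariationOn g (Set.Icc 0 1) ∧ (∫ x in (0 : ℝ)..1, g x) = 0 ∧
      (0 < Filter.liminf
        (fun ν : ℕ => ∑ k ∈ Finset.range (qden θ ν).toNat, g (k * θ)) atTop) ∧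
      Filter.Tendsto (fun ν : ℕ => ∑ k ∈ Finset.range (qden θ ν).toNat, g (k * θ))
        atTop (nhds (1 / 6)) := by
  have hr := tendsto_qden_div_succ hθ hfast
  have hqpos := qden_pos hθ
  have hqpos' (n : ℕ) : (0 : ℝ) < qden θ n := by exact_mod_cast hqpos n
  obtain ⟨N, hN⟩ := eventually_atTop.1
    (hr.eventually_le_const (show (0 : ℝ) < 1 / 1000 by norm_num))
  let q : ℕ → ℤ := fun n => qden θ (n + N)
  have hq' (n : ℕ) : 1000 * q n ≤ q (n + 1) := by
    have h := hN (n + N) (by omega)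
    rw [div_le_div_iff₀ (hqpos' _) (by norm_num), one_mul, mul_comm] at h
    simp only [q, add_right_comm n 1 N]
    exact_mod_cast h
  obtain ⟨μ, _, _, hμ⟩ := exists_isProbabilityMeasure_nullSingletonClass
    (measurableSet_nearThreeQuarters q)
    (not_countable_nearThreeQuarters (fun n => hqpos (n + N)) hq')
  have hμ1 : ∀ᵐ t ∂μ, t ∈ Set.Ico (0 : ℝ) 1 := hμ.mono fun t ht => ht.1
  have hbound (n : ℕ) (hn : N ≤ n) :
      |∑ k ∈ Finset.range (qden θ n).toNat, centeredCDF μ (k * θ) - 1 / 4|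
        ≤ 15 * ((qden θ n : ℝ) / qden θ (n + 1)) := by
    have hcast : (((qden θ n).toNat : ℕ) : ℤ) = qden θ n := Int.toNat_of_nonneg (hqpos n).le
    have hcast' : (((qden θ n).toNat : ℕ) : ℝ) = qden θ n := by exact_mod_cast hcast
    have hrn := hN n hn
    have hD : qden θ n * |qden θ n * θ - pnum θ n| ≤ (qden θ n : ℝ) / qden θ (n + 1) := by
      rw [le_div_iff₀ (hqpos' _), mul_assoc, mul_comm |_|]
      exact mul_le_of_le_one_right (hqpos' n).le (qden_mul_abs_le_one hθ h0 n)
    refine abs_sum_centeredCDF_sub_le hμ1 ?_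
    filter_upwards [hμ] with t ht
    have htn := ht.2 (n - N)
    simp only [q, add_right_comm _ 1 N, Nat.sub_add_cancel hn] at htn
    have h := abs_sum_range_kernel_sub_le (Q := (qden θ n).toNat) (θ := θ) (t := t)
      (by have := hqpos n; omega) (P := pnum θ n) (by rw [hcast]; exact isCoprime_pnum_qden θ n)
      (by rw [hcast']; linarith) ht.1 (by rw [hcast']; linarith)
    rw [hcast'] at h
    rw [abs_le] at h htn ⊢
    constructor <;> linarith [h.1, h.2, htn.1, htn.2]
  have hlim : Tendsto (fun ν : ℕ => ∑ k ∈ Finset.range (qden θ ν).toNat,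
      2 / 3 * centeredCDF μ (k * θ)) atTop (nhds (1 / 6)) := by
    have h : Tendsto (fun ν : ℕ => ∑ k ∈ Finset.range (qden θ ν).toNat,
        centeredCDF μ (k * θ)) atTop (nhds (1 / 4)) := by
      rw [tendsto_iff_norm_sub_tendsto_zero]
      refine squeeze_zero' (.of_forall fun _ => norm_nonneg _)
        (eventually_atTop.2 ⟨N, hbound⟩) ?_
      simpa using hr.const_mul 15
    simp only [← Finset.mul_sum]
    convert h.const_mul (2 / 3) using 2
    norm_num
  refine ⟨fun y => 2 / 3 * centeredCDF μ y, continuous_const.mul (continuous_centeredCDF hμ1),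
    fun y => by simp only [centeredCDF_add_one], ?_, ?_, ?_, hlim⟩
  · refine (boundedVariationOn_centeredCDF hμ1).of_edist_le fun x _ y _ => ?_
    rw [edist_dist, edist_dist, Real.dist_eq, Real.dist_eq, ← mul_sub, abs_mul]
    refine ENNReal.ofReal_le_ofReal (mul_le_of_le_one_left (abs_nonneg _) ?_)
    norm_num [abs_le]
  · rw [intervalIntegral.integral_const_mul, integral_centeredCDF hμ1, mul_zero]
  · rw [hlim.liminf_eq]
    norm_num
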